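/- Fix integers n, m with 1 ≤ m ≤ (n+1)/2, let P := Y_{m,n−m+1} with I-coloring κ((i,j)) := j − i + m and J-coloring κ̃((i,j)) := the orbit of κ((i,j)) under k ↦ n+1−k. Let 𝓕̃(P) be the set of all order filters of P of the form S̃_{p_r}(⋯(S̃_{p_1}(∅))⋯) for some r ≥ 0 and p_1, …, p_r ∈ J (the orbit of the empty order filter under the operators S̃_p, p ∈ J). Then 𝓕̃(P) = {Y ∈ 𝓕(P) : 𝓘(Y) ∩ 𝓘̄(Y) = ∅}. -/

import Mathlib

/-- `F` is an order filter of the poset `α`: upward closed subset. -/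
def IsOrderFilter {α : Type*} [PartialOrder α] (F : Set α) : Prop :=
  ∀ ⦃x y : α⦄, x ∈ F → x ≤ y → y ∈ F

/-- `A_c(F)`: the union of all order filters `F'` with `F' \ F ⊆ κ⁻¹({c})`. -/
def Aop {α C : Type*} [PartialOrder α] (κ : α → C) (c : C) (F : Set α) : Set α :=
  ⋃₀ {F' : Set α | IsOrderFilter F' ∧ F' \ F ⊆ κ ⁻¹' {c}}

/-- `R_c(F)`: the intersection of all order filters `F'` with `F \ F' ⊆ κ⁻¹({c})`. -/
def Rop {α C : Type*} [PartialOrder α] (κ : α → C) (c : C) (F : Set α) : Set α :=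
  ⋂₀ {F' : Set α | IsOrderFilter F' ∧ F \ F' ⊆ κ ⁻¹' {c}}

open Classical in
/-- `S_c(F) := (A_c(F) \ F) ∪ R_c(F)` if this is an order filter, and `F` otherwise. -/
noncomputable def Sop {α C : Type*} [PartialOrder α] (κ : α → C) (c : C) (F : Set α) : Set α :=
  if IsOrderFilter ((Aop κ c F \ F) ∪ Rop κ c F) then (Aop κ c F \ F) ∪ Rop κ c F else F

/-- The rectangular Young diagram poset `Y_{m,N}` (cells `(i,j)`, `1 ≤ i ≤ m`,
`1 ≤ j ≤ N`, with `(i₁,j₁) ≤ (i₂,j₂)` iff `i₁ ≥ i₂` and `j₁ ≥ j₂`), realized as the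
product of two dual finite chains. -/
abbrev YD (m N : ℕ) := (Fin m)ᵒᵈ × (Fin N)ᵒᵈ

/-- The `I`-coloring of `Y_{m, n−m+1}` for type `A_n`: `κ((i,j)) = j − i + m`
(in 1-indexed coordinates), with values in `{1,…,n}`. -/
def ykappa (m N : ℕ) (x : YD m N) : ℤ :=
  ((OrderDual.ofDual x.2 : Fin N) : ℤ) - ((OrderDual.ofDual x.1 : Fin m) : ℤ) + m

/-- The `J`-coloring of `Y_{m, n−m+1}`: the orbit of the color `κ((i,j)) = j − i + m`
under the Dynkin diagram involution `k ↦ n+1−k`, encoded by its minimal element, i.e.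
`κ̃((i,j)) = min{ j−i+m , i−j+n−m+1 }`. -/
def ytkappa (n m N : ℕ) (x : YD m N) : ℤ :=
  min (ykappa m N x) ((n : ℤ) + 1 - ykappa m N x)

/-- The length `𝐤_i` of row `i` of a subset `Y` of `Y_{m,N}`:
the number of cells of `Y` in row `i`. -/
noncomputable def rowLen (m N : ℕ) (Y : Set (YD m N)) (i : Fin m) : ℕ :=
  Set.ncard {j : Fin N | (OrderDual.toDual i, OrderDual.toDual j) ∈ Y}

/-- `𝓘(Y) := {𝐤_i + m + 1 − i : 1 ≤ i ≤ m} ⊆ {1,…,n+1}` (here the row index `i`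
is 0-indexed, so the element for row `i` is `𝐤_i + m − i`). -/
def ISet (m N : ℕ) (Y : Set (YD m N)) : Set ℤ :=
  {z : ℤ | ∃ i : Fin m, z = (rowLen m N Y i : ℤ) + m - (i : ℤ)}

/-- One application of a folded operator `S̃_p` for some orbit `p ∈ J`: every orbit of
the involution `k ↦ n+1−k` on `{1,…,n}` is of the form `{k, n+1−k}` for some
`k ∈ {1,…,n}`, and is encoded (as a value of the `J`-coloring `κ̃`) by its minimum
`min(k, n+1−k)`. -/
def foldStep (n m N : ℕ) (F F' : Set (YD m N)) : Prop :=
  ∃ k : ℤ, 1 ≤ k ∧ k ≤ n ∧ F' = Sop (ytkappa n m N) (min k ((n : ℤ) + 1 - k)) F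

/-- `M k` counts the beads strictly to the right of `k`. -/
def MOK (n m : ℕ) (M : ℤ → ℤ) : Prop :=
  M 0 = m ∧ M (n + 1) = 0 ∧ ∀ z : ℤ, 1 ≤ z → z ≤ n + 1 → M z ≤ M (z - 1) ∧ M (z - 1) ≤ M z + 1

/-- No two beads in complementary positions. -/
def MV (n : ℕ) (M : ℤ → ℤ) : Prop :=
  ∀ z w : ℤ, 1 ≤ z → z ≤ n + 1 → w = n + 2 - z → M (z - 1) = M z + 1 → M (w - 1) = M w + 1 → False

def filt (m N : ℕ) (M : ℤ → ℤ) : Set (YD m N) :=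
  {x | ((OrderDual.ofDual x.1 : Fin m) : ℤ) < M (ykappa m N x)}

/-- The symmetric relation which forces `Sop κ c F = G`. -/
def TRel {α C : Type*} [PartialOrder α] (κ : α → C) (c : C) (F G : Set α) : Prop :=
  IsOrderFilter F ∧ IsOrderFilter G ∧ (∀ x, κ x ≠ c → (x ∈ F ↔ x ∈ G)) ∧
  (∀ x, κ x = c → x ∉ F → x ∉ G → ∃ y, x ≤ y ∧ y ∉ F ∧ κ y ≠ c) ∧
  (∀ x, κ x = c → x ∈ F → x ∈ G → ∃ y, y ≤ x ∧ y ∈ F ∧ κ y ≠ c)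

theorem TRel.symm' {α C : Type*} [PartialOrder α] {κ : α → C} {c : C} {F G : Set α}
    (h : TRel κ c F G) : TRel κ c G F := by
  obtain ⟨hF, hG, h1, h2, h3⟩ := h
  refine ⟨hG, hF, fun x hx => (h1 x hx).symm, ?_, ?_⟩
  · intro x hx a b
    obtain ⟨y, hy, hyF, hc⟩ := h2 x hx b a
    exact ⟨y, hy, fun h => hyF ((h1 y hc).2 h), hc⟩
  · intro x hx a b
    obtain ⟨y, hy, hyF, hc⟩ := h3 x hx b a
    exact ⟨y, hy, (h1 y hc).1 hyF, hc⟩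

theorem TRel.sop {α C : Type*} [PartialOrder α] {κ : α → C} {c : C} {F G : Set α}
    (h : TRel κ c F G) : Sop κ c F = G := by
  obtain ⟨hF, hG, h1, h2, h3⟩ := h
  have hA : Aop κ c F = F ∪ G := by
    apply Set.Subset.antisymm
    · rintro x ⟨F', ⟨hF', hc⟩, hx⟩
      by_contra hn
      simp only [Set.mem_union, not_or] at hn
      have hk : κ x = c := hc ⟨hx, hn.1⟩
      obtain ⟨y, hy, hyF, hyc⟩ := h2 x hk hn.1 hn.2
      exact hyc (hc ⟨hF' hx hy, hyF⟩)
    · apply Set.subset_sUnion_of_mem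
      refine ⟨?_, ?_⟩
      · rintro x y (hx | hx) hxy
        · exact Or.inl (hF hx hxy)
        · exact Or.inr (hG hx hxy)
      · rintro x ⟨hx, hxF⟩
        by_contra hk
        have := h1 x hk
        rcases hx with hx | hx
        · exact hxF hx
        · exact hxF (this.2 hx)
  have hR : Rop κ c F = F ∩ G := by
    apply Set.Subset.antisymm
    · apply Set.sInter_subset_of_mem
      refine ⟨?_, ?_⟩
      · rintro x y ⟨hx, hx'⟩ hxy
        exact ⟨hF hx hxy, hG hx' hxy⟩
      · rintro x ⟨hx, hxF⟩
        by_contra hk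
        exact hxF ⟨hx, (h1 x hk).1 hx⟩
    · rintro x ⟨hx, hx'⟩ F' ⟨hF', hc⟩
      by_contra hn
      have hk : κ x = c := hc ⟨hx, hn⟩
      obtain ⟨y, hy, hyF, hyc⟩ := h3 x hk hx hx'
      exact hyc (hc ⟨hyF, fun h => hn (hF' h hy)⟩)
  have hE : (Aop κ c F \ F) ∪ Rop κ c F = G := by
    rw [hA, hR]
    ext x
    simp only [Set.mem_union, Set.mem_diff, Set.mem_inter_iff]
    tauto
  unfold Sop
  rw [hE, if_pos hG]

theorem MOK.lip {n m : ℕ} {M : ℤ → ℤ} (h : MOK n m M) (a : ℤ) (ha : 0 ≤ a) (t : ℕ)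
    (hb : a + t ≤ n + 1) : M (a + t) ≤ M a ∧ M a ≤ M (a + t) + t := by
  induction t with
  | zero => simp
  | succ t ih =>
    have h1 := ih (by push_cast at hb; omega)
    have h2 := h.2.2 (a + (t + 1 : ℕ)) (by push_cast; omega) hb
    have e : a + ((t + 1 : ℕ) : ℤ) - 1 = a + t := by push_cast; ring
    rw [e] at h2
    push_cast at *
    omega

theorem MOK.lip' {n m : ℕ} {M : ℤ → ℤ} (h : MOK n m M) (a b : ℤ) (ha : 0 ≤ a) (hab : a ≤ b)
    (hb : b ≤ n + 1) : M b ≤ M a ∧ M a ≤ M b + (b - a) := by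
  have := h.lip a ha (b - a).toNat (by omega)
  have e : ((b - a).toNat : ℤ) = b - a := by omega
  rw [e] at this
  simpa using this

theorem MOK.bd {n m : ℕ} {M : ℤ → ℤ} (h : MOK n m M) (a : ℤ) (ha : 0 ≤ a)
    (hb : a ≤ n + 1) : 0 ≤ M a ∧ M a ≤ m ∧ m - a ≤ M a ∧ M a ≤ n + 1 - a := by
  have h1 := h.lip' 0 a le_rfl ha hb
  have h2 := h.lip' a (n + 1) ha hb le_rfl
  rw [h.1] at h1
  rw [h.2.1] at h2
  omega

/-- cell constructor -/
def cell {m N : ℕ} (i : Fin m) (j : Fin N) : YD m N := (OrderDual.toDual i, OrderDual.toDual j)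

theorem cell_le {m N : ℕ} {i i' : Fin m} {j j' : Fin N} :
    (cell i j ≤ cell i' j') ↔ i' ≤ i ∧ j' ≤ j := Iff.rfl

theorem cell_kappa {m N : ℕ} (i : Fin m) (j : Fin N) :
    ykappa m N (cell i j) = (j : ℤ) - i + m := rfl

theorem mem_filt {m N : ℕ} {M : ℤ → ℤ} (i : Fin m) (j : Fin N) :
    cell i j ∈ filt m N M ↔ (i : ℤ) < M ((j : ℤ) - i + m) := Iff.rfl

theorem filt_isOrderFilter {n m N : ℕ} (hN : N + m = n + 1) {M : ℤ → ℤ} (h : MOK n m M) :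
    IsOrderFilter (filt m N M) := by
  rintro ⟨i, j⟩ ⟨i', j'⟩ hx hxy
  change cell (OrderDual.ofDual i) (OrderDual.ofDual j) ∈ _ at hx
  change cell (OrderDual.ofDual i') (OrderDual.ofDual j') ∈ _
  change cell (OrderDual.ofDual i) (OrderDual.ofDual j) ≤
    cell (OrderDual.ofDual i') (OrderDual.ofDual j') at hxy
  generalize OrderDual.ofDual i = i at *
  generalize OrderDual.ofDual j = j at *
  generalize OrderDual.ofDual i' = i' at *
  generalize OrderDual.ofDual j' = j' at *
  rw [cell_le] at hxy
  rw [mem_filt] at *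
  obtain ⟨h1, h2⟩ := hxy
  rw [Fin.le_def] at h1 h2
  have := i.2
  have := j.2
  rcases le_total ((j' : ℤ) - i' + m) ((j : ℤ) - i + m) with hk | hk
  · have := h.lip' _ _ (by omega) hk (by omega)
    omega
  · have := h.lip' _ _ (by omega) hk (by omega)
    omega

theorem rowLen_le {m N : ℕ} (Y : Set (YD m N)) (i : Fin m) : rowLen m N Y i ≤ N := by
  unfold rowLen
  have := Set.ncard_le_card {j : Fin N | (OrderDual.toDual i, OrderDual.toDual j) ∈ Y}
  simpa using this

theorem lower_ncard {N : ℕ} (S : Set (Fin N)) (hS : ∀ a b : Fin N, a ∈ S → b ≤ a → b ∈ S)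
    (j : Fin N) : j ∈ S ↔ (j : ℕ) < S.ncard := by
  constructor
  · intro hj
    have h1 : Set.Iic j ⊆ S := fun b hb => hS j b hj hb
    have h2 := Set.ncard_le_ncard h1 (Set.toFinite _)
    have h3 : (Set.Iic j).ncard = (j : ℕ) + 1 := by
      rw [Set.ncard_eq_toFinset_card']
      simp
    omega
  · intro hj
    by_contra hn
    have h1 : S ⊆ Set.Iio j := by
      intro b hb
      by_contra hlt
      exact hn (hS b j hb (not_lt.mp hlt))
    have h2 := Set.ncard_le_ncard h1 (Set.toFinite _)
    have h3 : (Set.Iio j).ncard = (j : ℕ) := by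
      rw [Set.ncard_eq_toFinset_card']
      simp
    omega

theorem mem_iff_rowLen {m N : ℕ} {Y : Set (YD m N)} (hY : IsOrderFilter Y) (i : Fin m)
    (j : Fin N) : cell i j ∈ Y ↔ (j : ℕ) < rowLen m N Y i := by
  unfold rowLen
  rw [← lower_ncard]
  · rfl
  · intro a b ha hb
    exact hY (x := cell i a) (y := cell i b) ha (cell_le.2 ⟨le_rfl, hb⟩)

theorem rowLen_anti {m N : ℕ} {Y : Set (YD m N)} (hY : IsOrderFilter Y) {i i' : Fin m}
    (h : i ≤ i') : rowLen m N Y i' ≤ rowLen m N Y i := by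
  by_contra hlt
  have hb := rowLen_le Y i'
  have h1 := (mem_iff_rowLen hY i' ⟨rowLen m N Y i, by omega⟩).2 (by simpa using hlt)
  have h2 := hY h1 (cell_le.2 ⟨h, le_rfl⟩)
  have h3 := (mem_iff_rowLen hY i _).1 h2
  simp at h3

theorem bead_iff {n m N : ℕ} (hN : N + m = n + 1) {M : ℤ → ℤ} (h : MOK n m M) (i : Fin m)
    (k : ℤ) (h0 : 0 ≤ k) (hk : k ≤ n + 1) :
    k < (rowLen m N (filt m N M) i : ℤ) + m - i ↔ (i : ℤ) < M k := by
  have hi := i.2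
  have hb := h.bd k h0 hk
  have hr := rowLen_le (filt m N M) i
  by_cases h1 : k + i - m < 0
  · constructor <;> intro <;> omega
  by_cases h2 : k + i - m < N
  · have h3 := mem_iff_rowLen (filt_isOrderFilter hN h) i ⟨(k + i - m).toNat, by omega⟩
    rw [mem_filt] at h3
    have e : (((k + i - m).toNat : ℕ) : ℤ) - i + m = k := by omega
    simp only [e] at h3
    rw [h3]
    omega
  · constructor <;> intro <;> omega

theorem mem_ISet_filt {n m N : ℕ} (hN : N + m = n + 1) {M : ℤ → ℤ} (h : MOK n m M) (z : ℤ) :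
    z ∈ ISet m N (filt m N M) ↔ 1 ≤ z ∧ z ≤ n + 1 ∧ M (z - 1) = M z + 1 := by
  constructor
  · rintro ⟨i, hi⟩
    have hr := rowLen_le (filt m N M) i
    have := i.2
    have h1 : 1 ≤ z := by omega
    have h2 : z ≤ n + 1 := by omega
    have a := bead_iff hN h i (z - 1) (by omega) (by omega)
    have b := bead_iff hN h i z (by omega) (by omega)
    have := h.2.2 z h1 h2
    refine ⟨h1, h2, ?_⟩
    omega
  · rintro ⟨h1, h2, h3⟩
    have b1 := h.bd z (by omega) h2
    have b2 := h.bd (z - 1) (by omega) (by omega)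
    have a := bead_iff hN h ⟨(M z).toNat, by omega⟩ (z - 1) (by omega) (by omega)
    have b := bead_iff hN h ⟨(M z).toNat, by omega⟩ z (by omega) (by omega)
    refine ⟨⟨(M z).toNat, by omega⟩, ?_⟩
    simp only at *
    omega

theorem MV_iff {n m N : ℕ} (hN : N + m = n + 1) {M : ℤ → ℤ} (h : MOK n m M) :
    MV n M ↔ ISet m N (filt m N M) ∩
      ((fun z : ℤ => (n : ℤ) + 2 - z) '' ISet m N (filt m N M)) = ∅ := by
  rw [Set.eq_empty_iff_forall_notMem]
  constructor
  · rintro hV z ⟨hz, w, hw, hwz⟩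
    rw [mem_ISet_filt hN h] at hz hw
    simp only at hwz
    exact hV z w hz.1 hz.2.1 (by omega) hz.2.2 hw.2.2
  · intro hE z w h1 h2 hw h3 h4
    refine hE z ⟨(mem_ISet_filt hN h z).2 ⟨h1, h2, h3⟩, w, (mem_ISet_filt hN h w).2
      ⟨by omega, by omega, h4⟩, by simp only; omega⟩

theorem exists_M {n m N : ℕ} (hN : N + m = n + 1) {Y : Set (YD m N)} (hY : IsOrderFilter Y) :
    ∃ M, MOK n m M ∧ Y = filt m N M := by
  classical
  let b : Fin m → ℤ := fun i => (rowLen m N Y i : ℤ) + m - i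
  have hb : StrictAnti b := by
    intro i i' hi
    have := rowLen_anti hY hi.le
    have := Fin.lt_def.1 hi
    simp only [b]
    omega
  have hb1 : ∀ i, 1 ≤ b i := by
    intro i
    have := i.2
    simp only [b]
    omega
  have hb2 : ∀ i, b i ≤ n + 1 := by
    intro i
    have := rowLen_le Y i
    simp only [b]
    omega
  let S : ℤ → Set (Fin m) := fun k => {i | k < b i}
  refine ⟨fun k => ((S k).ncard : ℤ), ⟨?_, ?_, ?_⟩, ?_⟩
  · have : S 0 = Set.univ := by
      ext i
      have := hb1 i
      simp only [S, Set.mem_setOf_eq, Set.mem_univ, iff_true]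
      omega
    simp [this]
  · have : S (n + 1) = ∅ := by
      ext i
      have := hb2 i
      simp only [S, Set.mem_setOf_eq, Set.mem_empty_iff_false, iff_false]
      omega
    simp [this]
  · intro z _ _
    constructor
    · have : S z ⊆ S (z - 1) := by
        intro i hi
        simp only [S, Set.mem_setOf_eq] at *
        omega
      have h := Set.ncard_le_ncard this (Set.toFinite _)
      simp only
      omega
    · have h1 : S (z - 1) ⊆ S z ∪ {i | b i = z} := by
        intro i hi
        simp only [S, Set.mem_setOf_eq, Set.mem_union] at *
        omega
      have h2 := Set.ncard_le_ncard h1 (Set.toFinite _)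
      have h3 := Set.ncard_union_le (S z) {i | b i = z}
      have h4 : ({i | b i = z} : Set (Fin m)).ncard ≤ 1 := by
        rw [Set.ncard_le_one (Set.toFinite _)]
        intro a ha c hc
        exact hb.injective (ha.trans hc.symm)
      simp only
      omega
  · ext ⟨i, j⟩
    change cell (OrderDual.ofDual i) (OrderDual.ofDual j) ∈ _ ↔
      cell (OrderDual.ofDual i) (OrderDual.ofDual j) ∈ _
    generalize OrderDual.ofDual i = i at *
    generalize OrderDual.ofDual j = j at *
    rw [mem_filt, mem_iff_rowLen hY]
    have := lower_ncard (S ((j : ℤ) - i + m)) (by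
      intro a c ha hc
      have := hb.antitone hc
      simp only [S, Set.mem_setOf_eq] at *
      omega) i
    simp only [Nat.cast_lt]
    rw [← this]
    simp only [S, b, Set.mem_setOf_eq]
    omega

/-- The reflected counting function. -/
def mrefl (n : ℕ) (c : ℤ) (M : ℤ → ℤ) (k : ℤ) : ℤ :=
  if (n : ℤ) = 2 * c then
    (if k = c ∨ k = c + 1 then M (c - 1) + M (c + 2) - M c else M k)
  else
    (if k = c ∨ k = n + 1 - c then M (k - 1) + M (k + 1) - M k else M k)

/-- The bead involution. -/
def sg (n : ℕ) (c : ℤ) (z : ℤ) : ℤ :=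
  if (n : ℤ) = 2 * c then
    (if z = c then c + 2 else if z = c + 2 then c else z)
  else
    (if z = c then c + 1 else if z = c + 1 then c else
      if z = n + 1 - c then n + 2 - c else if z = n + 2 - c then n + 1 - c else z)

theorem MV.mid {n m : ℕ} {M : ℤ → ℤ} (h : MOK n m M) (hV : MV n M) {c : ℤ} (hn : (n : ℤ) = 2 * c) :
    M (c + 1) = M c := by
  have h1 := h.2.2 (c + 1) (by omega) (by omega)
  have h2 := hV (c + 1) (c + 1) (by omega) (by omega) (by omega)
  have e : c + 1 - 1 = c := by ring
  rw [e] at h1 h2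
  by_contra hne
  exact h2 (by omega) (by omega)

theorem refl_diff {n m : ℕ} {M : ℤ → ℤ} (h : MOK n m M) (hV : MV n M) {c : ℤ} (h1 : 1 ≤ c)
    (h2 : 2 * c ≤ n + 1) (z : ℤ) :
    mrefl n c M (z - 1) - mrefl n c M z = M (sg n c z - 1) - M (sg n c z) := by
  by_cases hn : (n : ℤ) = 2 * c
  · have := hV.mid h hn
    simp only [mrefl, sg, if_pos hn]
    grind
  · simp only [mrefl, sg, if_neg hn]
    grind

theorem sg_mem {n : ℕ} {c : ℤ} (h1 : 1 ≤ c) (h2 : 2 * c ≤ n + 1) {z : ℤ} (hz : 1 ≤ z)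
    (hz' : z ≤ n + 1) : 1 ≤ sg n c z ∧ sg n c z ≤ n + 1 := by
  unfold sg
  split_ifs <;> omega

theorem sg_compl {n : ℕ} {c : ℤ} (h2 : 2 * c ≤ n + 1) (z : ℤ) : sg n c (n + 2 - z) = n + 2 - sg n c z := by
  unfold sg
  split_ifs <;> omega

theorem refl_OK {n m : ℕ} {M : ℤ → ℤ} (h : MOK n m M) (hV : MV n M) {c : ℤ} (h1 : 1 ≤ c)
    (h2 : 2 * c ≤ n + 1) : MOK n m (mrefl n c M) := by
  refine ⟨?_, ?_, ?_⟩
  · rw [← h.1]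
    unfold mrefl
    split_ifs <;> first | rfl | omega
  · rw [← h.2.1]
    unfold mrefl
    split_ifs <;> first | rfl | omega
  · intro z hz hz'
    have a := refl_diff h hV h1 h2 z
    have b := sg_mem h1 h2 hz hz'
    have := h.2.2 _ b.1 b.2
    omega

theorem refl_V {n m : ℕ} {M : ℤ → ℤ} (h : MOK n m M) (hV : MV n M) {c : ℤ} (h1 : 1 ≤ c)
    (h2 : 2 * c ≤ n + 1) : MV n (mrefl n c M) := by
  intro z w hz hz' hw e1 e2
  have a := refl_diff h hV h1 h2 z
  have a' := refl_diff h hV h1 h2 w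
  have b := sg_mem h1 h2 hz hz'
  subst hw
  rw [sg_compl h2] at a'
  exact hV _ _ b.1 b.2 rfl (by omega) (by omega)

theorem up_cell {n m N : ℕ} (hN : N + m = n + 1) {M : ℤ → ℤ} (h : MOK n m M) (i i' : Fin m)
    (j : Fin N) (a : ℤ) (ha : 0 ≤ a) (ha' : a ≤ n + 1) (hi : i' ≤ i) (hc : M a ≤ i')
    (hj : a + i' - m ≤ j) : ∃ y : YD m N, cell i j ≤ y ∧ y ∉ filt m N M ∧ ykappa m N y = a := by
  have hb := h.bd a ha ha'
  have := j.2
  refine ⟨cell i' ⟨(a + i' - m).toNat, by omega⟩, ?_, ?_, ?_⟩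
  · rw [cell_le, Fin.le_def, Fin.le_def]
    refine ⟨hi, ?_⟩
    simp only
    omega
  · rw [mem_filt]
    have e : (((a + i' - m).toNat : ℕ) : ℤ) - i' + m = a := by omega
    simp only [e]
    omega
  · rw [cell_kappa]
    simp only
    omega

theorem down_cell {n m N : ℕ} (hN : N + m = n + 1) {M : ℤ → ℤ} (h : MOK n m M) (i i' : Fin m)
    (j : Fin N) (a : ℤ) (ha : 0 ≤ a) (ha' : a ≤ n + 1) (hi : i ≤ i') (hc : (i' : ℤ) < M a)
    (hj : j ≤ a + i' - m) : ∃ y : YD m N, y ≤ cell i j ∧ y ∈ filt m N M ∧ ykappa m N y = a := by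
  have hb := h.bd a ha ha'
  have := j.2
  refine ⟨cell i' ⟨(a + i' - m).toNat, by omega⟩, ?_, ?_, ?_⟩
  · rw [cell_le, Fin.le_def, Fin.le_def]
    refine ⟨hi, ?_⟩
    simp only
    omega
  · rw [mem_filt]
    have e : (((a + i' - m).toNat : ℕ) : ℤ) - i' + m = a := by omega
    simp only [e]
    omega
  · rw [cell_kappa]
    simp only
    omega

theorem refl_TRel {n m N : ℕ} (hN : N + m = n + 1) {M : ℤ → ℤ} (h : MOK n m M) (hV : MV n M)
    {c : ℤ} (h1 : 1 ≤ c) (h2 : 2 * c ≤ n + 1) :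
    TRel (ytkappa n m N) c (filt m N M) (filt m N (mrefl n c M)) := by
  have hcol : ∀ y : YD m N, ytkappa n m N y = c ↔
      (ykappa m N y = c ∨ ykappa m N y = n + 1 - c) := by
    intro y
    unfold ytkappa
    omega
  refine ⟨filt_isOrderFilter hN h, filt_isOrderFilter hN (refl_OK h hV h1 h2), ?_, ?_, ?_⟩
  · intro x hx
    rw [Ne, hcol] at hx
    have : mrefl n c M (ykappa m N x) = M (ykappa m N x) := by
      unfold mrefl
      split_ifs <;> first | rfl | omega
    unfold filt
    simp only [Set.mem_setOf_eq, this]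
  · rintro ⟨i, j⟩ hx hF hG
    change ytkappa n m N (cell (OrderDual.ofDual i) (OrderDual.ofDual j)) = c at hx
    change cell (OrderDual.ofDual i) (OrderDual.ofDual j) ∉ _ at hF
    change cell (OrderDual.ofDual i) (OrderDual.ofDual j) ∉ _ at hG
    change ∃ y, cell (OrderDual.ofDual i) (OrderDual.ofDual j) ≤ y ∧ _
    generalize OrderDual.ofDual i = i at *
    generalize OrderDual.ofDual j = j at *
    rw [hcol, cell_kappa] at hx
    rw [mem_filt, not_lt] at hF hG
    have hi := i.2
    by_cases hn : (n : ℤ) = 2 * c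
    · have hmid := hV.mid h hn
      have d1 := h.2.2 c (by omega) (by omega)
      have d2 := h.2.2 (c + 2) (by omega) (by omega)
      have e2 : c + 2 - 1 = c + 1 := by ring
      rw [e2, hmid] at d2
      have hv := hV c (c + 2) (by omega) (by omega) (by omega)
      rw [e2, hmid] at hv
      have hv' : ¬ (M (c - 1) = M c + 1 ∧ M c = M (c + 2) + 1) := fun hh => hv hh.1 hh.2
      have hF' : M c ≤ i := by
        rcases hx with hx | hx
        · rwa [hx] at hF
        · rw [hx] at hF
          have e : (n : ℤ) + 1 - c = c + 1 := by omega
          rwa [e, hmid] at hF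
      have hG' : M (c - 1) + M (c + 2) - M c ≤ i := by
        unfold mrefl at hG
        rwa [if_pos hn, if_pos (by omega)] at hG
      obtain ⟨y, hy1, hy2, hy3⟩ := up_cell hN h i i j (c - 1) (by omega) (by omega) le_rfl
        (by omega) (by omega)
      refine ⟨y, hy1, hy2, ?_⟩
      rw [Ne, hcol]
      omega
    · generalize hk : (j : ℤ) - i + m = k at *
      have hG' : M (k - 1) + M (k + 1) - M k ≤ i := by
        unfold mrefl at hG
        rwa [if_neg hn, if_pos (by omega)] at hG
      have d1 := h.2.2 k (by omega) (by omega)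
      have d2 := h.2.2 (k + 1) (by omega) (by omega)
      have e2 : k + 1 - 1 = k := by ring
      rw [e2] at d2
      by_cases hl : M (k - 1) ≤ i
      · obtain ⟨y, hy1, hy2, hy3⟩ := up_cell hN h i i j (k - 1) (by omega) (by omega) le_rfl
          (by omega) (by omega)
        refine ⟨y, hy1, hy2, ?_⟩
        rw [Ne, hcol]
        omega
      · have hb := h.bd (k + 1) (by omega) (by omega)
        obtain ⟨y, hy1, hy2, hy3⟩ := up_cell hN h i ⟨(i : ℕ) - 1, by omega⟩ j (k + 1) (by omega)
          (by omega) (by rw [Fin.le_def]; simp only; omega) (by simp only; omega)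
          (by simp only; omega)
        refine ⟨y, hy1, hy2, ?_⟩
        rw [Ne, hcol]
        omega
  · rintro ⟨i, j⟩ hx hF hG
    change ytkappa n m N (cell (OrderDual.ofDual i) (OrderDual.ofDual j)) = c at hx
    change cell (OrderDual.ofDual i) (OrderDual.ofDual j) ∈ _ at hF
    change cell (OrderDual.ofDual i) (OrderDual.ofDual j) ∈ _ at hG
    change ∃ y, y ≤ cell (OrderDual.ofDual i) (OrderDual.ofDual j) ∧ _
    generalize OrderDual.ofDual i = i at *
    generalize OrderDual.ofDual j = j at *
    rw [hcol, cell_kappa] at hx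
    rw [mem_filt] at hF hG
    have hi := i.2
    by_cases hn : (n : ℤ) = 2 * c
    · have hmid := hV.mid h hn
      have d1 := h.2.2 c (by omega) (by omega)
      have d2 := h.2.2 (c + 2) (by omega) (by omega)
      have e2 : c + 2 - 1 = c + 1 := by ring
      rw [e2, hmid] at d2
      have hv := hV c (c + 2) (by omega) (by omega) (by omega)
      rw [e2, hmid] at hv
      have hv' : ¬ (M (c - 1) = M c + 1 ∧ M c = M (c + 2) + 1) := fun hh => hv hh.1 hh.2
      have hF' : i < M c := by
        rcases hx with hx | hx
        · rwa [hx] at hF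
        · rw [hx] at hF
          have e : (n : ℤ) + 1 - c = c + 1 := by omega
          rwa [e, hmid] at hF
      have hG' : i < M (c - 1) + M (c + 2) - M c := by
        unfold mrefl at hG
        rwa [if_pos hn, if_pos (by omega)] at hG
      obtain ⟨y, hy1, hy2, hy3⟩ := down_cell hN h i i j (c + 2) (by omega) (by omega) le_rfl
        (by omega) (by omega)
      refine ⟨y, hy1, hy2, ?_⟩
      rw [Ne, hcol]
      omega
    · generalize hk : (j : ℤ) - i + m = k at *
      have hG' : i < M (k - 1) + M (k + 1) - M k := by
        unfold mrefl at hG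
        rwa [if_neg hn, if_pos (by omega)] at hG
      have d1 := h.2.2 k (by omega) (by omega)
      have d2 := h.2.2 (k + 1) (by omega) (by omega)
      have e2 : k + 1 - 1 = k := by ring
      rw [e2] at d2
      by_cases hl : i < M (k + 1)
      · obtain ⟨y, hy1, hy2, hy3⟩ := down_cell hN h i i j (k + 1) (by omega) (by omega) le_rfl
          (by omega) (by omega)
        refine ⟨y, hy1, hy2, ?_⟩
        rw [Ne, hcol]
        omega
      · have hb := h.bd (k - 1) (by omega) (by omega)
        obtain ⟨y, hy1, hy2, hy3⟩ := down_cell hN h i ⟨(i : ℕ) + 1, by omega⟩ j (k - 1) (by omega)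
          (by omega) (by rw [Fin.le_def]; simp only; omega) (by push_cast; omega)
          (by push_cast; omega)
        refine ⟨y, hy1, hy2, ?_⟩
        rw [Ne, hcol]
        omega

/-- If beads have no gap to the left, the filter is empty. -/
theorem empty_of_no_descent {n m N : ℕ} (hN : N + m = n + 1) {M : ℤ → ℤ} (h : MOK n m M)
    (hd : ∀ z : ℤ, 1 ≤ z → z ≤ n → M (z - 1) = M z → M z = M (z + 1)) :
    filt m N M = ∅ := by
  have key : ∀ (t : ℕ) (k : ℤ), 1 ≤ k → k + t = n + 1 → M (k - 1) = M k → M k = 0 := by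
    intro t
    induction t with
    | zero =>
      intro k _ hk _
      have : k = n + 1 := by push_cast at hk; omega
      rw [this]
      exact h.2.1
    | succ t ih =>
      intro k hk1 hk he
      push_cast at hk
      have e1 := hd k hk1 (by omega) he
      have e2 := ih (k + 1) (by omega) (by omega) (by rw [← e1]; congr 1; ring)
      omega
  have main : ∀ k : ℕ, (k : ℤ) ≤ n + 1 → M k = m - k ∨ M k = 0 := by
    intro k
    induction k with
    | zero =>
      intro _
      left
      simpa using h.1
    | succ k ih =>
      intro hk
      have e : ((k + 1 : ℕ) : ℤ) - 1 = k := by push_cast; ring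
      have hs := h.2.2 ((k + 1 : ℕ) : ℤ) (by push_cast; omega) hk
      have hb := h.bd ((k + 1 : ℕ) : ℤ) (by push_cast; omega) hk
      rcases ih (by push_cast at hk; omega) with h1 | h1
      · by_cases h2 : M (((k + 1 : ℕ) : ℤ) - 1) = M ((k + 1 : ℕ) : ℤ)
        · right
          exact key (n - k) _ (by push_cast; omega) (by push_cast at *; omega) h2
        · left
          rw [e] at hs h2
          push_cast at *
          omega
      · right
        rw [e] at hs
        omega
  rw [Set.eq_empty_iff_forall_notMem]
  rintro ⟨i, j⟩ hx
  change cell (OrderDual.ofDual i) (OrderDual.ofDual j) ∈ _ at hx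
  generalize OrderDual.ofDual i = i at *
  generalize OrderDual.ofDual j = j at *
  rw [mem_filt] at hx
  have hi := i.2
  have hj := j.2
  have h1 := main ((j : ℤ) - i + m).toNat (by omega)
  have e : (((j : ℤ) - i + m).toNat : ℤ) = (j : ℤ) - i + m := by omega
  rw [e] at h1
  omega

theorem refl_descent {n m : ℕ} {M : ℤ → ℤ} (h : MOK n m M) (hV : MV n M) {z : ℤ} (hz : 1 ≤ z)
    (hz' : z ≤ n) (e1 : M (z - 1) = M z) (e2 : M z ≠ M (z + 1)) :
    ∑ k ∈ Finset.Icc (1 : ℤ) n, mrefl n (min z (n + 1 - z)) M k < ∑ k ∈ Finset.Icc (1 : ℤ) n, M k := by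
  have d2 := h.2.2 (z + 1) (by omega) (by omega)
  rw [show z + 1 - 1 = z by ring] at d2
  have v := hV (z + 1) (n + 1 - z) (by omega) (by omega) (by omega)
  rw [show z + 1 - 1 = z by ring] at v
  have d3 := h.2.2 (n + 1 - z) (by omega) (by omega)
  have d4 := h.2.2 (n + 1 - z + 1) (by omega) (by omega)
  rw [show (n : ℤ) + 1 - z + 1 - 1 = n + 1 - z by ring] at d4
  generalize hc : min z (n + 1 - z) = c
  have hzc : z = c ∨ z = n + 1 - c := by omega
  by_cases hn : (n : ℤ) = 2 * c
  · have hmid := hV.mid h hn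
    have hz2 : z = c + 1 := by
      rcases hzc with hh | hh
      · subst hh
        omega
      · omega
    subst hz2
    have a1 : (n : ℤ) + 1 - (c + 1) = c := by omega
    rw [a1] at d3 d4 v
    have a2 : c + 1 + 1 = c + 2 := by ring
    rw [a2] at d2 v e2
    have r : ∀ k, mrefl n c M k ≤ M k := by
      intro k
      simp only [mrefl, if_pos hn]
      grind
    refine Finset.sum_lt_sum (fun k _ => r k) ⟨c + 1, by rw [Finset.mem_Icc]; omega, ?_⟩
    simp only [mrefl, if_pos hn]
    grind
  · have r : ∀ k, mrefl n c M k ≤ M k := by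
      intro k
      simp only [mrefl, if_neg hn]
      grind
    refine Finset.sum_lt_sum (fun k _ => r k) ⟨z, by rw [Finset.mem_Icc]; omega, ?_⟩
    simp only [mrefl, if_neg hn, if_pos hzc]
    omega

theorem reach_all {n m N : ℕ} (hN : N + m = n + 1) :
    ∀ (t : ℕ) (M : ℤ → ℤ), MOK n m M → MV n M → ∑ k ∈ Finset.Icc (1 : ℤ) n, M k ≤ t →
      Relation.ReflTransGen (foldStep n m N) ∅ (filt m N M) := by
  intro t
  induction t with
  | zero =>
    intro M h hV ht
    rw [empty_of_no_descent hN h]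
    intro z hz hz' e1
    by_contra e2
    have hlt := refl_descent h hV hz hz' e1 e2
    have h' := refl_OK h hV (c := min z (n + 1 - z)) (by omega) (by omega)
    have : 0 ≤ ∑ k ∈ Finset.Icc (1 : ℤ) n, mrefl n (min z (n + 1 - z)) M k := by
      apply Finset.sum_nonneg
      intro k hk
      rw [Finset.mem_Icc] at hk
      exact (h'.bd k (by omega) (by omega)).1
    push_cast at ht
    omega
  | succ t ih =>
    intro M h hV ht
    by_cases hd : ∀ z : ℤ, 1 ≤ z → z ≤ n → M (z - 1) = M z → M z = M (z + 1)
    · rw [empty_of_no_descent hN h hd]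
    · push Not at hd
      obtain ⟨z, hz, hz', e1, e2⟩ := hd
      have hlt := refl_descent h hV hz hz' e1 e2
      have c1 : 1 ≤ min z ((n : ℤ) + 1 - z) := by omega
      have c2 : 2 * min z ((n : ℤ) + 1 - z) ≤ n + 1 := by omega
      refine (ih _ (refl_OK h hV c1 c2) (refl_V h hV c1 c2) (by push_cast at ht; omega)).tail
        ⟨z, hz, hz', ?_⟩
      exact (refl_TRel hN h hV c1 c2).symm'.sop.symm

theorem reach_inv {n m N : ℕ} (hm : 2 * m ≤ n + 1) (hN : N + m = n + 1) {Y : Set (YD m N)}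
    (hY : Relation.ReflTransGen (foldStep n m N) ∅ Y) :
    ∃ M, MOK n m M ∧ MV n M ∧ Y = filt m N M := by
  induction hY with
  | refl =>
    have hM : MOK n m (fun k => max 0 (m - k)) := by
      refine ⟨?_, ?_, ?_⟩
      · simp
      · simp only
        omega
      · intro z _ _
        simp only
        omega
    refine ⟨_, hM, ?_, ?_⟩
    · intro z w _ _ hw e1 e2
      simp only at e1 e2
      omega
    · rw [empty_of_no_descent hN hM]
      intro z _ _
      omega
  | tail _ hs ih =>
    obtain ⟨M, h, hV, rfl⟩ := ih
    obtain ⟨k, hk, hk', rfl⟩ := hs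
    have c1 : 1 ≤ min k ((n : ℤ) + 1 - k) := by omega
    have c2 : 2 * min k ((n : ℤ) + 1 - k) ≤ n + 1 := by omega
    exact ⟨_, refl_OK h hV c1 c2, refl_V h hV c1 c2, (refl_TRel hN h hV c1 c2).sop⟩

/-- Explicit description of `𝓕̃(P)` for `P = Y_{m,n−m+1}` (type `A_n` folded):
the set of order filters reachable from `∅` by the folded operators `S̃_p`, `p ∈ J`,
equals the set of order filters `Y` with `𝓘(Y) ∩ 𝓘̄(Y) = ∅`, where
`𝓘̄(Y) = {n+2−i : i ∈ 𝓘(Y)}`. -/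
theorem foldOrbit_eq_selfComplementaryFree (n m : ℕ) (hm : 1 ≤ m) (hmn : 2 * m ≤ n + 1) :
    {Y : Set (YD m (n - m + 1)) |
        Relation.ReflTransGen (foldStep n m (n - m + 1)) ∅ Y} =
      {Y : Set (YD m (n - m + 1)) | IsOrderFilter Y ∧
        ISet m (n - m + 1) Y ∩ ((fun z : ℤ => (n : ℤ) + 2 - z) '' ISet m (n - m + 1) Y)
          = ∅} := by
  have hN : (n - m + 1) + m = n + 1 := by omega
  ext Y
  simp only [Set.mem_setOf_eq]
  constructor
  · intro hY
    obtain ⟨M, h, hV, rfl⟩ := reach_inv hmn hN hY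
    exact ⟨filt_isOrderFilter hN h, (MV_iff hN h).1 hV⟩
  · rintro ⟨hY, hI⟩
    obtain ⟨M, h, rfl⟩ := exists_M hN hY
    exact reach_all hN _ M h ((MV_iff hN h).2 hI) (Int.self_le_toNat _)
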